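/- arXiv:2007.11582 — 5 statements merged into one kernel-verified Lean document; each statement's English description precedes it below -/
import Mathlib

section
/- Let N ≥ 2 be a natural number, let c, s, Δ be reals with 0 < s < c and Δ > 0, and let q ≥ 1 be a natural number such that (N − 1)·exp(−q·Δ/s) ≤ (c − s)/(2s). Let A and B be N×N complex Hermitian positive semidefinite matrices such that: the largest eigenvalue of A is at least c; the largest eigenvalue λ₁ of B is at most s; and λ₁ − λ₂ ≥ Δ, where λ₂ is the second-largest eigenvalue of B (listed with multiplicity). Then Tr(A^q) − Tr(B^q) ≥ s^{q−1}·(c − s)/2; in particular Tr(A^q) > Tr(B^q). -/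
open scoped ComplexOrder

/-!
The trace of a power of a Hermitian matrix is the power sum of its eigenvalues. For `A` a single
eigenvalue already contributes `c ^ q ≥ s ^ (q - 1) * c`. For `B` the top eigenvalue contributes at
most `s ^ q`, and each of the other `N - 1` lies below `s - Δ ≤ s * exp (-Δ / s)`, so together they
contribute at most `s ^ q * (N - 1) * exp (-q * Δ / s) ≤ s ^ (q - 1) * (c - s) / 2`, which is half
of the difference between `s ^ (q - 1) * c` and `s ^ q`.
-/

section RealBounds

variable {s Δ : ℝ}

lemma sub_le_mul_exp_neg_div (hs : 0 < s) : s - Δ ≤ s * Real.exp (-(Δ / s)) :=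
  calc s - Δ = s * (1 - Δ / s) := by field_simp
    _ ≤ s * Real.exp (-(Δ / s)) := by gcongr; exact Real.one_sub_le_exp_neg _

lemma pow_le_pow_mul_exp_of_le_sub {x : ℝ} (hs : 0 < s) (hx : 0 ≤ x) (hxs : x ≤ s - Δ) (q : ℕ) :
    x ^ q ≤ s ^ q * Real.exp (-(q * Δ / s)) :=
  calc x ^ q ≤ (s * Real.exp (-(Δ / s))) ^ q := by
        gcongr; exact hxs.trans (sub_le_mul_exp_neg_div hs)
    _ = s ^ q * Real.exp (-(q * Δ / s)) := by
        rw [mul_pow, ← Real.exp_nat_mul, mul_neg, mul_div_assoc]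

lemma sum_pow_le_of_gap {ι : Type*} [Fintype ι] {x : ι → ℝ} {i₀ : ι} (hs : 0 < s)
    (hx : ∀ i, 0 ≤ x i) (hmax : x i₀ ≤ s) (hgap : ∀ i ≠ i₀, Δ ≤ x i₀ - x i) (q : ℕ) :
    ∑ i, x i ^ q ≤ s ^ q * (1 + ((Fintype.card ι : ℝ) - 1) * Real.exp (-(q * Δ / s))) := by
  classical
  have htop : x i₀ ^ q ≤ s ^ q := pow_le_pow_left₀ (hx i₀) hmax q
  have hrest : ∑ i ∈ Finset.univ.erase i₀, x i ^ q ≤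
      ((Fintype.card ι : ℝ) - 1) * (s ^ q * Real.exp (-(q * Δ / s))) := by
    rw [← Finset.card_univ, ← Finset.cast_card_erase_of_mem (Finset.mem_univ i₀), ← nsmul_eq_mul]
    refine Finset.sum_le_card_nsmul _ _ _ fun i hi ↦ pow_le_pow_mul_exp_of_le_sub hs (hx i) ?_ q
    linarith [hgap i (Finset.ne_of_mem_erase hi)]
  rw [← Finset.add_sum_erase _ _ (Finset.mem_univ i₀)]
  linarith

lemma pow_pred_mul_half_sub_le {c ε : ℝ} {q : ℕ} (hs : 0 < s) (hsc : s ≤ c) (hq : 1 ≤ q)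
    (hε : ε ≤ (c - s) / (2 * s)) :
    s ^ (q - 1) * (c - s) / 2 ≤ c ^ q - s ^ q * (1 + ε) := by
  obtain ⟨k, rfl⟩ := Nat.exists_eq_add_of_le' hq
  have hpow : s ^ k * c ≤ c ^ (k + 1) := by
    rw [pow_succ]
    gcongr
    exact hs.le.trans hsc
  have herr : s ^ (k + 1) * ε ≤ s ^ k * (c - s) / 2 :=
    calc s ^ (k + 1) * ε ≤ s ^ (k + 1) * ((c - s) / (2 * s)) := by gcongr
      _ = s ^ k * (c - s) / 2 := by rw [pow_succ]; field_simp
  rw [Nat.add_sub_cancel]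
  linarith [pow_succ s k]

end RealBounds

lemma apply_le_apply_one_of_antitone_comp {N : ℕ} (hN : 2 ≤ N) {ι α : Type*} [Preorder α]
    {x : ι → α} (e : Fin N ≃ ι) (hanti : Antitone (x ∘ e)) {i : ι} (hi : i ≠ e ⟨0, by omega⟩) :
    x i ≤ x (e ⟨1, by omega⟩) := by
  obtain ⟨j, rfl⟩ := e.surjective i
  have hj : (j : ℕ) ≠ 0 := fun h ↦ hi (congrArg e (Fin.ext h))
  exact hanti (Fin.mk_le_of_le_val (Nat.one_le_iff_ne_zero.2 hj))

section TracePow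

variable {𝕜 n : Type*} [RCLike 𝕜] [Fintype n] [DecidableEq n] {A B : Matrix n n 𝕜}

lemma trace_pow_eq_sum_eigenvalues_pow (hA : A.IsHermitian) (q : ℕ) :
    (A ^ q).trace = ∑ i, (hA.eigenvalues i : 𝕜) ^ q := by
  conv_lhs => rw [hA.spectral_theorem, ← map_pow, Unitary.conjStarAlgAut_apply,
    Matrix.trace_mul_comm, ← mul_assoc, Unitary.coe_star_mul_self, one_mul, Matrix.diagonal_pow,
    Matrix.trace_diagonal]
  rfl

lemma re_trace_pow_eq_sum_eigenvalues_pow (hA : A.IsHermitian) (q : ℕ) :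
    RCLike.re (A ^ q).trace = ∑ i, hA.eigenvalues i ^ q := by
  rw [trace_pow_eq_sum_eigenvalues_pow hA]
  exact_mod_cast RCLike.ofReal_re (K := 𝕜) _

lemma pow_le_re_trace_pow (hA : A.PosSemidef) {c : ℝ} (hc : 0 ≤ c) {i : n}
    (hi : c ≤ hA.isHermitian.eigenvalues i) (q : ℕ) : c ^ q ≤ RCLike.re (A ^ q).trace := by
  rw [re_trace_pow_eq_sum_eigenvalues_pow hA.isHermitian]
  calc c ^ q ≤ hA.isHermitian.eigenvalues i ^ q := by gcongr
    _ ≤ ∑ j, hA.isHermitian.eigenvalues j ^ q :=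
        Finset.single_le_sum (f := fun j ↦ hA.isHermitian.eigenvalues j ^ q)
          (fun j _ ↦ pow_nonneg (hA.eigenvalues_nonneg j) q) (Finset.mem_univ i)

theorem stmt1_general {c s Δ : ℝ} (hs : 0 < s) (hsc : s < c) {q : ℕ} (hq : 1 ≤ q)
    (hqbig : ((Fintype.card n : ℝ) - 1) * Real.exp (-(q * Δ / s)) ≤ (c - s) / (2 * s))
    (hA : A.PosSemidef) (hB : B.PosSemidef) (hAmax : ∃ i, c ≤ hA.isHermitian.eigenvalues i)
    {i₀ : n} (hBmax : hB.isHermitian.eigenvalues i₀ ≤ s)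
    (hgap : ∀ i ≠ i₀, Δ ≤ hB.isHermitian.eigenvalues i₀ - hB.isHermitian.eigenvalues i) :
    s ^ (q - 1) * (c - s) / 2 ≤ RCLike.re (A ^ q).trace - RCLike.re (B ^ q).trace ∧
      RCLike.re (B ^ q).trace < RCLike.re (A ^ q).trace := by
  obtain ⟨i, hi⟩ := hAmax
  have hAtrace : c ^ q ≤ RCLike.re (A ^ q).trace :=
    pow_le_re_trace_pow hA (hs.trans hsc).le hi q
  have hBtrace : RCLike.re (B ^ q).trace ≤
      s ^ q * (1 + ((Fintype.card n : ℝ) - 1) * Real.exp (-(q * Δ / s))) := by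
    rw [re_trace_pow_eq_sum_eigenvalues_pow hB.isHermitian]
    exact sum_pow_le_of_gap hs hB.eigenvalues_nonneg hBmax hgap q
  have hsep : s ^ (q - 1) * (c - s) / 2 ≤ RCLike.re (A ^ q).trace - RCLike.re (B ^ q).trace :=
    (pow_pred_mul_half_sub_le hs hsc.le hq hqbig).trans (sub_le_sub hAtrace hBtrace)
  have hpos : 0 < s ^ (q - 1) * (c - s) / 2 := by have := sub_pos.2 hsc; positivity
  exact ⟨hsep, sub_pos.1 (hpos.trans_le hsep)⟩

end TracePow

/-- Trace separation for the power method: if `A` (YES accept operator) is Hermitian PSD with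
largest eigenvalue at least `c`, and `B` (NO accept operator) is Hermitian PSD with largest
eigenvalue `λ₁ ≤ s` and second-largest eigenvalue `λ₂` satisfying `λ₁ - λ₂ ≥ Δ`, and
`(N - 1) * exp (-q * Δ / s) ≤ (c - s) / (2 * s)`, then
`Tr (A ^ q) - Tr (B ^ q) ≥ s ^ (q - 1) * (c - s) / 2`, so in particular
`Tr (A ^ q) > Tr (B ^ q)`. -/
theorem stmt1 (N : ℕ) (hN : 2 ≤ N) (c s Δ : ℝ) (hs : 0 < s) (hsc : s < c) (hΔ : 0 < Δ)
    (q : ℕ) (hq : 1 ≤ q)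
    (hqbig : ((N : ℝ) - 1) * Real.exp (-(q * Δ / s)) ≤ (c - s) / (2 * s))
    (A B : Matrix (Fin N) (Fin N) ℂ) (hA : A.PosSemidef) (hB : B.PosSemidef)
    (hAmax : ∃ i, c ≤ hA.isHermitian.eigenvalues i)
    (μ : Fin N → ℝ) (hanti : Antitone μ)
    (hperm : ∃ σ : Equiv.Perm (Fin N), ∀ i, μ i = hB.isHermitian.eigenvalues (σ i))
    (hBmax : μ ⟨0, by omega⟩ ≤ s)
    (hgap : Δ ≤ μ ⟨0, by omega⟩ - μ ⟨1, by omega⟩) :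
    s ^ (q - 1) * (c - s) / 2 ≤ ((A ^ q).trace).re - ((B ^ q).trace).re ∧
      ((B ^ q).trace).re < ((A ^ q).trace).re := by
  obtain ⟨σ, hσ⟩ := hperm
  obtain rfl : μ = hB.isHermitian.eigenvalues ∘ σ := funext hσ
  exact stmt1_general hs hsc hq (by rwa [Fintype.card_fin]) hA hB hAmax hBmax fun i hi ↦
    hgap.trans (sub_le_sub_left (apply_le_apply_one_of_antitone_comp hN σ hanti hi) _)
end

section
/- For all reals u and v with 0 ≤ u ≤ v ≤ π/2: cos u − cos v ≥ (v − u)²/2 − (v − u)³/6. -/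
open Real

/-!
On `[0, π]` the function `1 - cos` is superadditive, so `cos u - cos v ≥ 1 - cos (v - u)`: the
estimate is reduced to `u = 0`. There `1 - cos d ≥ d² / 2 - d⁴ / 24`, and `d⁴ / 24 ≤ d³ / 6`
because `d ≤ π ≤ 4`.
-/

theorem one_add_cos_add_le_cos_add_cos {a b : ℝ} (ha : 0 ≤ a) (hb : 0 ≤ b) (hab : a + b ≤ π) :
    1 + cos (a + b) ≤ cos a + cos b := by
  have cos_half_sum_nonneg : 0 ≤ cos ((a + b) / 2) :=
    cos_nonneg_of_neg_pi_div_two_le_of_le (by linarith [pi_pos]) (by linarith)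
  have cos_half_sum_le : cos ((a + b) / 2) ≤ cos ((a - b) / 2) := by
    rw [← cos_abs ((a - b) / 2)]
    exact cos_le_cos_of_nonneg_of_le_pi (abs_nonneg _) (by linarith [pi_pos])
      (abs_le.2 ⟨by linarith, by linarith⟩)
  calc 1 + cos (a + b) = 2 * cos ((a + b) / 2) * cos ((a + b) / 2) := by
        rw [mul_assoc, ← sq, cos_sq, mul_div_cancel₀ (a + b) two_ne_zero]
        ring
    _ ≤ 2 * cos ((a + b) / 2) * cos ((a - b) / 2) := by gcongr
    _ = cos a + cos b := (cos_add_cos a b).symm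

theorem sq_sub_pow_four_div_three_le_sin_sq (x : ℝ) : x ^ 2 - x ^ 4 / 3 ≤ sin x ^ 2 := by
  wlog hx : 0 ≤ x generalizing x
  · simpa [Even.neg_pow (by decide : Even 4)] using this (-x) (by linarith)
  have sub_sin_nonneg : 0 ≤ x - sin x := sub_nonneg.2 (sin_le hx)
  have sq_sub_sin_sq_le : x ^ 2 - sin x ^ 2 ≤ x ^ 4 / 3 :=
    calc x ^ 2 - sin x ^ 2 = (x - sin x) * (x + sin x) := by ring
      _ ≤ (x - sin x) * (x + x) := by gcongr; exact sin_le hx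
      _ ≤ x ^ 3 / 6 * (x + x) := by gcongr; linarith [sin_ge_sub_cube hx]
      _ = x ^ 4 / 3 := by ring
  linarith

theorem cos_le_one_sub_sq_div_two_add_pow_four_div_24 (x : ℝ) :
    cos x ≤ 1 - x ^ 2 / 2 + x ^ 4 / 24 := by
  have half_angle : sin (x / 2) ^ 2 = 1 / 2 - cos x / 2 := by
    rw [sin_sq_eq_half_sub, mul_div_cancel₀ x two_ne_zero]
  linarith [sq_sub_pow_four_div_three_le_sin_sq (x / 2)]

theorem stmt5_general (u v : ℝ) (hu : 0 ≤ u) (huv : u ≤ v) (hv : v ≤ π) :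
    (v - u) ^ 2 / 2 - (v - u) ^ 3 / 6 ≤ cos u - cos v := by
  have diff_nonneg : 0 ≤ v - u := sub_nonneg.2 huv
  have quartic_le_cubic : (v - u) ^ 4 / 24 ≤ (v - u) ^ 3 / 6 :=
    calc (v - u) ^ 4 / 24 = (v - u) ^ 3 * (v - u) / 24 := by ring
      _ ≤ (v - u) ^ 3 * 4 / 24 := by gcongr; linarith [pi_le_four]
      _ = (v - u) ^ 3 / 6 := by ring
  calc (v - u) ^ 2 / 2 - (v - u) ^ 3 / 6 ≤ (v - u) ^ 2 / 2 - (v - u) ^ 4 / 24 := by gcongr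
    _ ≤ 1 - cos (v - u) := by linarith [cos_le_one_sub_sq_div_two_add_pow_four_div_24 (v - u)]
    _ ≤ cos u - cos v := by
      have superadditive := one_add_cos_add_le_cos_add_cos hu diff_nonneg (by linarith)
      rw [add_sub_cancel] at superadditive
      linarith

/-- For all reals `0 ≤ u ≤ v ≤ π/2`: `cos u - cos v ≥ (v - u)²/2 - (v - u)³/6`. -/
theorem stmt5 (u v : ℝ) (hu : 0 ≤ u) (huv : u ≤ v) (hv : v ≤ π / 2) :
    (v - u) ^ 2 / 2 - (v - u) ^ 3 / 6 ≤ cos u - cos v :=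
  stmt5_general u v hu huv (by linarith [pi_pos])
end

section
/- For n ≥ 1 and a real number λ, let P_n(λ) be the n×n real tridiagonal matrix whose diagonal entries are all 2 − λ except the last, which is 1 − λ, whose entries immediately above and below the diagonal are all 1, and whose other entries are 0. Then for every real θ with cos(θ/2) ≠ 0: det(P_n(2 − 2·cos θ)) = cos((n + 1/2)·θ) / cos(θ/2). -/
open Real

/-- The `n × n` tridiagonal matrix with diagonal entries `2 - λ` except the last, which is
`1 - λ`, with `1` immediately above and below the diagonal and `0` elsewhere. -/
def triP (n : ℕ) (lam : ℝ) : Matrix (Fin n) (Fin n) ℝ :=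
  Matrix.of fun i j =>
    if i = j then (if (i : ℕ) = n - 1 then 1 - lam else 2 - lam)
    else if (i : ℕ) + 1 = (j : ℕ) ∨ (j : ℕ) + 1 = (i : ℕ) then 1 else 0

section Determinant

variable {R : Type*} [CommRing R] {n : ℕ}

theorem det_eq_mul_det_submatrix_of_column_zero (A : Matrix (Fin (n + 1)) (Fin (n + 1)) R)
    (hcol : ∀ i : Fin n, A i.succ 0 = 0) :
    A.det = A 0 0 * (A.submatrix Fin.succ Fin.succ).det := by
  rw [Matrix.det_succ_column_zero, Fin.sum_univ_succ]
  simp [hcol]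

theorem det_eq_sub_det_submatrix_of_row_column_zero (A : Matrix (Fin (n + 2)) (Fin (n + 2)) R)
    (hrow : ∀ j : Fin n, A 0 j.succ.succ = 0) (hcol : ∀ i : Fin n, A i.succ.succ 0 = 0) :
    A.det = A 0 0 * (A.submatrix Fin.succ Fin.succ).det -
      A 0 1 * A 1 0 * (A.submatrix (Fin.succ ∘ Fin.succ) (Fin.succ ∘ Fin.succ)).det := by
  have columns : (Fin.succAbove 1 ∘ Fin.succ : Fin n → Fin (n + 2)) = Fin.succ ∘ Fin.succ :=
    funext Fin.one_succAbove_succ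
  have minor_zero_one : (A.submatrix Fin.succ (Fin.succAbove 1)).det =
      A 1 0 * (A.submatrix (Fin.succ ∘ Fin.succ) (Fin.succ ∘ Fin.succ)).det := by
    rw [det_eq_mul_det_submatrix_of_column_zero _ (by simpa using hcol),
      Matrix.submatrix_submatrix, columns]
    rfl
  rw [Matrix.det_succ_row_zero, Fin.sum_univ_succ, Fin.sum_univ_succ]
  simp [hrow, minor_zero_one, mul_assoc, sub_eq_add_neg]

end Determinant

theorem triP_submatrix_succ (n : ℕ) (lam : ℝ) :
    (triP (n + 1) lam).submatrix Fin.succ Fin.succ = triP n lam := by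
  ext i j
  have last_iff : (i : ℕ) + 1 = n ↔ (i : ℕ) = n - 1 := by omega
  simp [triP, last_iff]

theorem det_triP_one (lam : ℝ) : (triP 1 lam).det = 1 - lam := by
  simp [triP]

theorem det_triP_add_two (n : ℕ) (lam : ℝ) :
    (triP (n + 2) lam).det = (2 - lam) * (triP (n + 1) lam).det - (triP n lam).det := by
  have entry_zero_zero : triP (n + 2) lam 0 0 = 2 - lam := by simp [triP]
  have entry_zero_one : triP (n + 2) lam 0 1 = 1 := by simp [triP]
  have entry_one_zero : triP (n + 2) lam 1 0 = 1 := by simp [triP]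
  rw [det_eq_sub_det_submatrix_of_row_column_zero _ (by simp [triP, Fin.ext_iff])
      (by simp [triP, Fin.ext_iff]),
    ← Matrix.submatrix_submatrix, triP_submatrix_succ, triP_submatrix_succ,
    entry_zero_zero, entry_zero_one, entry_one_zero, one_mul, one_mul]

theorem cos_add_eq_two_mul_cos_mul_cos_sub (x y : ℝ) :
    cos (x + y) = 2 * cos y * cos x - cos (x - y) := by
  rw [cos_add, cos_sub]
  ring

-- With the denominator cleared, both sides satisfy `u (n + 2) = 2 * cos θ * u (n + 1) - u n`.
theorem det_triP_mul_cos_half (n : ℕ) (θ : ℝ) :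
    (triP n (2 - 2 * cos θ)).det * cos (θ / 2) = cos ((n + 1 / 2) * θ) := by
  induction n using Nat.twoStepInduction with
  | zero =>
    simp only [Matrix.det_fin_zero, one_mul, Nat.cast_zero]
    ring_nf
  | one =>
    calc (triP 1 (2 - 2 * cos θ)).det * cos (θ / 2)
        = 2 * cos θ * cos (θ / 2) - cos (θ / 2) := by rw [det_triP_one]; ring
      _ = cos (θ + θ / 2) := by
          rw [add_comm, cos_add_eq_two_mul_cos_mul_cos_sub, half_sub, cos_neg]
      _ = cos (((1 : ℕ) + 1 / 2) * θ) := by push_cast; ring_nf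
  | more n ih₀ ih₁ =>
    have previous_angle : (n + 1 / 2) * θ = ((n + 1 : ℕ) + 1 / 2) * θ - θ := by push_cast; ring
    have next_angle : ((n + 2 : ℕ) + 1 / 2) * θ = ((n + 1 : ℕ) + 1 / 2) * θ + θ := by
      push_cast; ring
    calc (triP (n + 2) (2 - 2 * cos θ)).det * cos (θ / 2)
        = 2 * cos θ * cos (((n + 1 : ℕ) + 1 / 2) * θ) - cos ((n + 1 / 2) * θ) := by
          rw [det_triP_add_two, ← ih₀, ← ih₁]; ring
      _ = cos (((n + 2 : ℕ) + 1 / 2) * θ) := by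
          rw [previous_angle, next_angle, cos_add_eq_two_mul_cos_mul_cos_sub]

/-- Closed form for the tridiagonal determinant:
`det (P_n (2 - 2 cos θ)) = cos ((n + 1/2) θ) / cos (θ/2)` whenever `cos (θ/2) ≠ 0`. -/
theorem stmt11 (n : ℕ) (hn : 1 ≤ n) (θ : ℝ) (hθ : cos (θ / 2) ≠ 0) :
    (triP n (2 - 2 * cos θ)).det = cos (((n : ℝ) + 1 / 2) * θ) / cos (θ / 2) :=
  eq_div_of_mul_eq hθ (det_triP_mul_cos_half n θ)
end

section
/- For n ≥ 1, let M_n be the n×n real symmetric tridiagonal matrix whose diagonal entries are all 2 except the last, which is 1, with entries 1 immediately above and below the diagonal and 0 elsewhere. Then the eigenvalues of M_n are exactly the n pairwise-distinct real numbers 4·sin²((2k − 1)·π/(4n + 2)) for k = 1, …, n. -/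
open Real

/-- The `n × n` symmetric tridiagonal matrix with diagonal `(2, …, 2, 1)` (last entry `1`),
`1` immediately above and below the diagonal, and `0` elsewhere. -/
def triM (n : ℕ) : Matrix (Fin n) (Fin n) ℝ :=
  Matrix.of fun i j =>
    if i = j then (if (i : ℕ) = n - 1 then 1 else 2)
    else if (i : ℕ) + 1 = (j : ℕ) ∨ (j : ℕ) + 1 = (i : ℕ) then 1 else 0

/-!
Read an eigenvector `x` of `M_n` as a sequence `u` with `u (j + 1) = x j` for `j < n`, extended by
the ghost values `u 0 = 0` and `u (n + 1) = -u n`. The ghost value at `n + 1` absorbs the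
exceptional last diagonal entry, so every row of the eigenvalue equation becomes the recurrence
`u j + 2 u (j + 1) + u (j + 2) = μ u (j + 1)`. The sequence `(-1) ^ j sin (2 j θ)` solves it with
`μ = 2 - 2 cos (2 θ) = 4 sin² θ`, and it meets the boundary condition at `n + 1` as soon as
`cos ((2 n + 1) θ) = 0`. The angles `θ = (2 k + 1) π / (4 n + 2)` with `k < n` lie in `(0, π / 2)`,
where `sin²` is injective; they give `n` distinct eigenvalues, and an `n × n` matrix has no more.
-/

section Spectrum

variable {K ι : Type*} [Field K] [Fintype ι] [DecidableEq ι]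

lemma spectrum_eq_rootSet_charpoly (A : Matrix ι ι K) :
    spectrum K A = A.charpoly.rootSet K := by
  ext μ
  rw [Matrix.mem_spectrum_iff_isRoot_charpoly,
    Polynomial.mem_rootSet_of_ne A.charpoly_monic.ne_zero, Polynomial.coe_aeval_eq_eval,
    Polynomial.IsRoot.def]

lemma ncard_spectrum_le_card (A : Matrix ι ι K) : (spectrum K A).ncard ≤ Fintype.card ι := by
  rw [spectrum_eq_rootSet_charpoly, ← A.charpoly_natDegree_eq_dim]
  exact A.charpoly.ncard_rootSet_le K

lemma spectrum_eq_range_of_injective {A : Matrix ι ι K} {μ : ι → K}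
    (hμ : Function.Injective μ) (hmem : ∀ k, μ k ∈ spectrum K A) :
    spectrum K A = Set.range μ := by
  have hcard : (spectrum K A).ncard ≤ (Set.range μ).ncard := by
    rw [Set.ncard_range_of_injective hμ, Nat.card_eq_fintype_card]
    exact ncard_spectrum_le_card A
  exact (Set.eq_of_subset_of_ncard_le (Set.range_subset_iff.2 hmem) hcard A.finite_spectrum).symm

lemma mem_spectrum_of_mulVec_eq_smul {A : Matrix ι ι K} {μ : K} {x : ι → K} (hx : x ≠ 0)
    (h : A.mulVec x = μ • x) : μ ∈ spectrum K A := by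
  have hvec : Module.End.HasEigenvector A.toLin' μ x :=
    ⟨Module.End.mem_eigenspace_iff.2 h, hx⟩
  rw [← Matrix.spectrum_toLin']
  exact (Module.End.hasEigenvalue_of_hasEigenvector hvec).mem_spectrum

end Spectrum

section Recurrence

variable {n : ℕ} {u : ℕ → ℝ}

lemma triM_apply_mul (i j : Fin n) (a : ℝ) :
    triM n i j * a = (if (i : ℕ) = j then (if (i : ℕ) + 1 = n then a else 2 * a) else 0)
      + (if (i : ℕ) + 1 = j then a else 0) + (if (j : ℕ) + 1 = i then a else 0) := by
  simp only [triM, Matrix.of_apply, Fin.ext_iff]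
  grind

lemma triM_mulVec_succ (hzero : u 0 = 0) (hlast : u (n + 1) = -u n) (i : Fin n) :
    (triM n).mulVec (fun j => u (j + 1)) i = u i + 2 * u (i + 1) + u (i + 2) := by
  obtain ⟨i, hi⟩ := i
  have hdiag_add_upper : (if i + 1 = n then u (i + 1) else 2 * u (i + 1))
      + (if i + 1 < n then u (i + 2) else 0) = 2 * u (i + 1) + u (i + 2) := by
    grind
  have hlower : ∑ j ∈ Finset.range n, (if j + 1 = i then u (j + 1) else 0) = u i := by
    cases i with
    | zero => simp [hzero]
    | succ i => simp [Nat.lt_of_succ_lt hi]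
  simp only [Matrix.mulVec, dotProduct, triM_apply_mul]
  rw [Fin.sum_univ_eq_sum_range (fun j => (if i = j then
      (if i + 1 = n then u (j + 1) else 2 * u (j + 1)) else 0)
    + (if i + 1 = j then u (j + 1) else 0) + (if j + 1 = i then u (j + 1) else 0)) n]
  simp only [Finset.sum_add_distrib, Finset.sum_ite_eq, Finset.mem_range, hi, if_true, hlower]
  linear_combination hdiag_add_upper

lemma mem_spectrum_triM_of_recurrence {μ : ℝ} (hzero : u 0 = 0) (hone : u 1 ≠ 0)
    (hlast : u (n + 1) = -u n)
    (hrec : ∀ j, u j + 2 * u (j + 1) + u (j + 2) = μ * u (j + 1)) :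
    μ ∈ spectrum ℝ (triM n) := by
  have hn : 0 < n := by
    rw [Nat.pos_iff_ne_zero]
    rintro rfl
    exact hone (by rw [hlast, hzero, neg_zero])
  refine mem_spectrum_of_mulVec_eq_smul (x := fun j => u (j + 1)) ?_ ?_
  · exact fun h => hone (congrFun h ⟨0, hn⟩)
  · ext i
    rw [triM_mulVec_succ hzero hlast, hrec, Pi.smul_apply, smul_eq_mul]

end Recurrence

section AlternatingSine

/-- The sequence `(-1) ^ j sin (j t)`. When `sin ((n + 1) t) = sin (n t)` and `sin t ≠ 0`, its terms
at `j = 1, …, n` are the entries of an eigenvector of `M_n` for the eigenvalue `2 - 2 cos t`. -/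
noncomputable def alternatingSine (t : ℝ) (j : ℕ) : ℝ :=
  (-1) ^ j * sin (j * t)

lemma alternatingSine_recurrence (t : ℝ) (j : ℕ) :
    alternatingSine t j + 2 * alternatingSine t (j + 1) + alternatingSine t (j + 2)
      = (2 - 2 * cos t) * alternatingSine t (j + 1) := by
  have hsum : sin (j * t) + sin ((j + 2 : ℕ) * t) = 2 * cos t * sin ((j + 1 : ℕ) * t) := by
    rw [add_comm, sin_add_sin]
    push_cast
    ring_nf
  simp only [alternatingSine, pow_succ]
  linear_combination (-1) ^ j * hsum

lemma alternatingSine_succ_eq_neg {n : ℕ} {θ : ℝ} (hcos : cos ((2 * n + 1) * θ) = 0) :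
    alternatingSine (2 * θ) (n + 1) = -alternatingSine (2 * θ) n := by
  have hsin : sin ((n + 1 : ℕ) * (2 * θ)) - sin (n * (2 * θ)) = 0 := by
    have hmid : ((n + 1 : ℕ) * (2 * θ) + n * (2 * θ)) / 2 = (2 * n + 1) * θ := by
      push_cast
      ring
    rw [sin_sub_sin, hmid, hcos, mul_zero]
  simp only [alternatingSine, pow_succ]
  linear_combination -(-1) ^ n * hsin

lemma four_mul_sin_sq_mem_spectrum_triM {n : ℕ} {θ : ℝ} (hsin : sin (2 * θ) ≠ 0)
    (hcos : cos ((2 * n + 1) * θ) = 0) : 4 * sin θ ^ 2 ∈ spectrum ℝ (triM n) := by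
  have heq : 4 * sin θ ^ 2 = 2 - 2 * cos (2 * θ) := by
    rw [sin_sq_eq_half_sub]
    ring
  rw [heq]
  exact mem_spectrum_triM_of_recurrence (u := alternatingSine (2 * θ))
    (by simp [alternatingSine]) (by simpa [alternatingSine] using hsin)
    (alternatingSine_succ_eq_neg hcos) (alternatingSine_recurrence (2 * θ))

end AlternatingSine

section Angle

/-- The positive solutions `θ` of `cos ((2 n + 1) θ) = 0`, in increasing order; those with `k < n`
give the eigenvalues `4 sin² θ` of `M_n`. The index `k` starts at `0`, so it is the `k - 1` of the
formula with `2 k - 1`. -/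
noncomputable def triMAngle (n k : ℕ) : ℝ :=
  (2 * k + 1) * π / (4 * n + 2)

lemma cos_mul_triMAngle (n k : ℕ) : cos ((2 * n + 1) * triMAngle n k) = 0 := by
  rw [cos_eq_zero_iff]
  refine ⟨k, ?_⟩
  rw [triMAngle]
  push_cast
  field_simp
  ring

lemma triMAngle_strictMono (n : ℕ) : StrictMono (triMAngle n) := by
  intro k l hkl
  unfold triMAngle
  gcongr

lemma triMAngle_mem_Ioo {n k : ℕ} (hk : k < n) : triMAngle n k ∈ Set.Ioo 0 (π / 2) := by
  constructor
  · unfold triMAngle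
    positivity
  · calc triMAngle n k < triMAngle n n := triMAngle_strictMono n hk
      _ = π / 2 := by
        unfold triMAngle
        field_simp
        ring

lemma sin_two_mul_triMAngle_ne_zero {n k : ℕ} (hk : k < n) : sin (2 * triMAngle n k) ≠ 0 := by
  obtain ⟨hpos, hlt⟩ := triMAngle_mem_Ioo hk
  exact (sin_pos_of_pos_of_lt_pi (by linarith) (by linarith)).ne'

lemma sin_sq_strictMonoOn : StrictMonoOn (fun x => sin x ^ 2) (Set.Icc 0 (π / 2)) := by
  intro x hx y hy hxy
  have hsin : sin x < sin y :=
    sin_lt_sin_of_lt_of_le_pi_div_two (by linarith [hx.1, pi_pos]) hy.2 hxy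
  exact pow_lt_pow_left₀ hsin
    (sin_nonneg_of_nonneg_of_le_pi hx.1 (by linarith [hx.2, pi_pos])) two_ne_zero

lemma four_mul_sin_sq_triMAngle_strictMono (n : ℕ) :
    StrictMono fun k : Fin n => 4 * sin (triMAngle n k) ^ 2 := by
  intro k l hkl
  have hsq := sin_sq_strictMonoOn (Set.Ioo_subset_Icc_self (triMAngle_mem_Ioo k.2))
    (Set.Ioo_subset_Icc_self (triMAngle_mem_Ioo l.2)) (triMAngle_strictMono n hkl)
  exact mul_lt_mul_of_pos_left hsq four_pos

end Angle

/-- The eigenvalues of `M_n` are exactly the `n` pairwise-distinct real numbers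
`4 sin² ((2k - 1) π / (4n + 2))` for `k = 1, …, n`. -/
theorem stmt13 (n : ℕ) (hn : 1 ≤ n) :
    Function.Injective
        (fun k : Fin n => 4 * sin ((2 * (k : ℕ) + 1) * π / (4 * n + 2)) ^ 2) ∧
      spectrum ℝ (triM n) =
        Set.range (fun k : Fin n => 4 * sin ((2 * (k : ℕ) + 1) * π / (4 * n + 2)) ^ 2) := by
  have hinj := (four_mul_sin_sq_triMAngle_strictMono n).injective
  exact ⟨hinj, spectrum_eq_range_of_injective hinj fun k =>
    four_mul_sin_sq_mem_spectrum_triM (sin_two_mul_triMAngle_ne_zero k.2) (cos_mul_triMAngle n k)⟩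
end

section
/- Let l, w, m be natural numbers with m ≥ l + w. Let k₁, k₂ be integers with 1 ≤ k₁ ≤ 2^l and 1 ≤ k₂ ≤ 2^l, and let y₁, y₂ be integers with 0 ≤ y₁ < 2^w and 0 ≤ y₂ < 2^w. If (k₁/2^l)·(1 − y₁/2^m) = (k₂/2^l)·(1 − y₂/2^m), then k₁ = k₂ and y₁ = y₂. -/
/-!
Scaled by `2 ^ l`, the acceptance probability is `k * (1 - t) = k - k * t` with `t = y / 2 ^ m`, and
the condition `l + w ≤ m` keeps the perturbation `k * t` in `[0, 1)`. So `k` is recovered as the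
ceiling of the scaled probability, and then `y` by cancelling `k`.
-/

open Set

theorem mul_mem_Ico_zero_pow {R : Type*} [Semiring R] [PartialOrder R] [IsStrictOrderedRing R]
    {b k y : R} {l w m : ℕ} (hb : 1 ≤ b) (hm : l + w ≤ m) (hk : 0 < k) (hkl : k ≤ b ^ l)
    (hy : 0 ≤ y) (hyw : y < b ^ w) : k * y ∈ Ico 0 (b ^ m) := by
  refine ⟨mul_nonneg hk.le hy, ?_⟩
  calc k * y < k * b ^ w := mul_lt_mul_of_pos_left hyw hk
    _ ≤ b ^ l * b ^ w := mul_le_mul_of_nonneg_right hkl (hy.trans hyw.le)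
    _ = b ^ (l + w) := (pow_add b l w).symm
    _ ≤ b ^ m := pow_le_pow_right₀ hb hm

theorem ceil_intCast_mul_one_sub {R : Type*} [Ring R] [LinearOrder R] [IsStrictOrderedRing R]
    [FloorRing R] {k : ℤ} {t : R} (ht : k * t ∈ Ico 0 1) : ⌈k * (1 - t)⌉ = k := by
  rw [Int.ceil_eq_iff, mul_one_sub]
  exact ⟨sub_lt_sub_left ht.2 _, sub_le_self _ ht.1⟩

theorem eq_and_eq_of_intCast_mul_one_sub_eq {R : Type*} [Ring R] [LinearOrder R]
    [IsStrictOrderedRing R] [FloorRing R] {k₁ k₂ : ℤ} {t₁ t₂ : R} (hk₁ : k₁ ≠ 0)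
    (ht₁ : k₁ * t₁ ∈ Ico 0 1) (ht₂ : k₂ * t₂ ∈ Ico 0 1)
    (heq : k₁ * (1 - t₁) = k₂ * (1 - t₂)) : k₁ = k₂ ∧ t₁ = t₂ := by
  obtain rfl : k₁ = k₂ := by
    rw [← ceil_intCast_mul_one_sub ht₁, heq, ceil_intCast_mul_one_sub ht₂]
  exact ⟨rfl, sub_right_injective (mul_left_cancel₀ (Int.cast_ne_zero.mpr hk₁) heq)⟩

theorem mul_div_mem_Ico_zero_one {R : Type*} [Field R] [LinearOrder R] [IsStrictOrderedRing R]
    {k y M : R} (h : k * y ∈ Ico 0 M) : k * (y / M) ∈ Ico 0 1 := by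
  have hM : 0 < M := h.1.trans_lt h.2
  rw [← mul_div_assoc]
  exact ⟨div_nonneg h.1 hM.le, (div_lt_one hM).mpr h.2⟩

theorem stmt18_general {R : Type*} [Field R] [LinearOrder R] [IsStrictOrderedRing R] [FloorRing R]
    {N M y₁ y₂ : R} {k₁ k₂ : ℤ} (hN : N ≠ 0) (hk₁ : k₁ ≠ 0)
    (h₁ : k₁ * y₁ ∈ Ico 0 M) (h₂ : k₂ * y₂ ∈ Ico 0 M)
    (heq : (k₁ / N) * (1 - y₁ / M) = (k₂ / N) * (1 - y₂ / M)) :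
    k₁ = k₂ ∧ y₁ = y₂ := by
  have hM : M ≠ 0 := (h₁.1.trans_lt h₁.2).ne'
  have heq_scaled : k₁ * (1 - y₁ / M) = k₂ * (1 - y₂ / M) := by
    rwa [div_mul_eq_mul_div, div_mul_eq_mul_div, div_left_inj' hN] at heq
  obtain ⟨hk, hy⟩ := eq_and_eq_of_intCast_mul_one_sub_eq hk₁ (mul_div_mem_Ico_zero_one h₁)
    (mul_div_mem_Ico_zero_one h₂) heq_scaled
  exact ⟨hk, (div_left_inj' hM).mp hy⟩

/-- Distinct classical witnesses receive distinct acceptance probabilities: for `m ≥ l + w`,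
`1 ≤ k₁, k₂ ≤ 2^l`, and `0 ≤ y₁, y₂ < 2^w`, if
`(k₁/2^l)(1 - y₁/2^m) = (k₂/2^l)(1 - y₂/2^m)` then `k₁ = k₂` and `y₁ = y₂`. -/
theorem stmt18 (l w m : ℕ) (hm : l + w ≤ m)
    (k₁ k₂ y₁ y₂ : ℤ)
    (hk₁ : 1 ≤ k₁) (hk₁' : k₁ ≤ 2 ^ l) (hk₂ : 1 ≤ k₂) (hk₂' : k₂ ≤ 2 ^ l)
    (hy₁ : 0 ≤ y₁) (hy₁' : y₁ < 2 ^ w) (hy₂ : 0 ≤ y₂) (hy₂' : y₂ < 2 ^ w)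
    (heq : ((k₁ : ℝ) / 2 ^ l) * (1 - (y₁ : ℝ) / 2 ^ m) =
      ((k₂ : ℝ) / 2 ^ l) * (1 - (y₂ : ℝ) / 2 ^ m)) :
    k₁ = k₂ ∧ y₁ = y₂ := by
  have mem_Ico {k y : ℤ} (hk : 0 < k) (hkl : k ≤ 2 ^ l) (hy : 0 ≤ y) (hyw : y < 2 ^ w) :
      (k * y : ℝ) ∈ Ico 0 (2 ^ m) :=
    mul_mem_Ico_zero_pow one_le_two hm (mod_cast hk) (mod_cast hkl) (mod_cast hy) (mod_cast hyw)
  exact_mod_cast stmt18_general (pow_ne_zero l two_ne_zero) (by lia)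
    (mem_Ico hk₁ hk₁' hy₁ hy₁') (mem_Ico hk₂ hk₂' hy₂ hy₂') heq
end
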